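/- Let S be a real symmetric d×d matrix of full rank with exactly m positive eigenvalues and G a maximal S-monotone set. Then graph(Q_G) = ∪_{γ ∈ Γ_f(G)} supp(γ), where Γ_f(G) is the family of probability measures γ on ℝ^{2d} with finite support such that γ is an optimal plan for the primal problem and G is an optimal set for the dual problem with terminal law ν(dy) := γ(ℝ^d, dy). -/

import Mathlib

/-!
Both inclusions rest on weak duality. A maximal monotone set `H` contains for each `x` a point `z`
with `S(z - x, z - x) ≤ 0`, the inequality being strict unless `x ∈ H`. Inserting `z = z(x)` in the
definition of the Fitzpatrick function and using the martingale property to replace `y` by `x` in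
`S(z(x), y)` gives `½ ∫ S(x,y) dγ ≤ ∫ ψ_H dν`, and equality forces `x ∈ H` and
`ψ_H(y) = S(x,y) - S(x,x)/2`, i.e. `x ∈ P_H(y)`, at every atom of `γ`
(`DMart.weak_duality`, `weak_duality_of_majorant`).

If `y ∈ Q_G(x)`, then `y` and `x + ε (x - y)` both project to `x`; the plan on these two points,
weighted so that `x` is their barycenter, has no duality gap
(`primalOpt_discPlan_const`, `dualOpt_discPlan`) and has `(x, y)` in its support.

Conversely, let `γ` and `G` be optimal, with `γ` finitely supported. Strong duality has to be
shown for `γ`. Splittings of the terminal weights into pieces collapsed to their barycenters are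
competitors for `γ`, so the Riesz extension theorem provides prices `f` on the terminal points with
total cost equal to the primal value, such that the convex hull of the points `(y, f y)` lies above
the graph of `S(a,a)/2` (`exists_prices`). A maximal convex set `E` above this graph and containing
the hull meets the graph in a maximal monotone set, whose Fitzpatrick function lies below `E`
(`exists_maxSMono`). Maximality of that set is a Kirszbraun-type statement: through every `w` there
is an affine subspace in a negative definite direction which contains a contact point, found as a
saddle point by Sion's theorem (`AboveQ.exists_minorant`). So the dual value is at most the primal
value, and the equality case of weak duality shows that `x ∈ P_G(y)` at every atom. Since `x` is
the barycenter of the atoms in its fibre and `P_G⁻¹(x)` is given by affine inequalities, each atom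
`y` of the fibre can be reflected slightly through `x` within `P_G⁻¹(x)`
(`mem_QG_of_mem_SProjInv`).
-/

open MeasureTheory Filter Set Matrix

noncomputable section

/-- The bilinear form of the matrix `S`: `S(x,y) = ⟨x, Sy⟩`. -/
def Sb {d : ℕ} (S : Matrix (Fin d) (Fin d) ℝ) (x y : Fin d → ℝ) : ℝ :=
  x ⬝ᵥ S.mulVec y

/-- A set `G` is `S`-monotone if `S(x-y,x-y) ≥ 0` for all `x, y ∈ G`. -/
def SMono {d : ℕ} (S : Matrix (Fin d) (Fin d) ℝ) (G : Set (Fin d → ℝ)) : Prop :=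
  ∀ x ∈ G, ∀ y ∈ G, 0 ≤ Sb S (x - y) (x - y)

/-- Maximal `S`-monotone set. -/
def MaxSMono {d : ℕ} (S : Matrix (Fin d) (Fin d) ℝ) (G : Set (Fin d → ℝ)) : Prop :=
  SMono S G ∧ ∀ H, SMono S H → G ⊆ H → H = G

/-- The Fitzpatrick function `ψ_G(y) = sup_{x∈G} (S(x,y) - S(x,x)/2)`, with values in
`ℝ ∪ {+∞}` (modeled in `EReal`). -/
def fitz {d : ℕ} (S : Matrix (Fin d) (Fin d) ℝ) (G : Set (Fin d → ℝ))
    (y : Fin d → ℝ) : EReal :=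
  ⨆ x ∈ G, ((Sb S x y - Sb S x x / 2 : ℝ) : EReal)

/-- Positive part of an extended real number, in `ℝ≥0∞`. -/
def epos (x : EReal) : ENNReal := if x = ⊤ then ⊤ else ENNReal.ofReal x.toReal

/-- Integral of an `EReal`-valued function: positive part minus negative part. -/
def eInt {α : Type*} [MeasurableSpace α] (μ : Measure α) (f : α → EReal) : EReal :=
  ((∫⁻ a, epos (f a) ∂μ : ENNReal) : EReal) - ((∫⁻ a, epos (-(f a)) ∂μ : ENNReal) : EReal)

/-- The martingale property of a measure `γ(dx,dy)` on `ℝ^d × ℝ^d`: the conditional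
expectation of `y` given `x` equals `x`, `γ`-a.s. -/
def MartProp {d : ℕ} (γ : Measure ((Fin d → ℝ) × (Fin d → ℝ))) : Prop :=
  γ[(fun p => p.2) | MeasurableSpace.comap Prod.fst inferInstance] =ᵐ[γ] fun p => p.1

/-- `γ ∈ Γ(ν)`: probability measures on `ℝ^d × ℝ^d` with finite second moment,
`y`-marginal `ν` and the martingale property. -/
def MGamma {d : ℕ} (ν : Measure (Fin d → ℝ))
    (γ : Measure ((Fin d → ℝ) × (Fin d → ℝ))) : Prop :=
  IsProbabilityMeasure γ ∧ γ.map Prod.snd = ν ∧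
    Integrable (fun p => ‖p.1‖ ^ 2 + ‖p.2‖ ^ 2) γ ∧ MartProp γ

/-- Value of the primal problem: `(1/2) ∫ S(x,y) dγ`. -/
def primalVal {d : ℕ} (S : Matrix (Fin d) (Fin d) ℝ)
    (γ : Measure ((Fin d → ℝ) × (Fin d → ℝ))) : ℝ :=
  (1 / 2) * ∫ p, Sb S p.1 p.2 ∂γ

/-- `γ` is an optimal plan for the primal problem. -/
def PrimalOpt {d : ℕ} (S : Matrix (Fin d) (Fin d) ℝ) (ν : Measure (Fin d → ℝ))
    (γ : Measure ((Fin d → ℝ) × (Fin d → ℝ))) : Prop :=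
  MGamma ν γ ∧ ∀ γ', MGamma ν γ' → primalVal S γ' ≤ primalVal S γ

/-- `G` is an optimal set for the dual problem: minimize `∫ ψ_G dν` over maximal
`S`-monotone sets. -/
def DualOpt {d : ℕ} (S : Matrix (Fin d) (Fin d) ℝ) (ν : Measure (Fin d → ℝ))
    (G : Set (Fin d → ℝ)) : Prop :=
  MaxSMono S G ∧ ∀ H, MaxSMono S H → eInt ν (fitz S G) ≤ eInt ν (fitz S H)

/-- The support of a measure: points all of whose neighborhoods have positive measure. -/
def msupp {α : Type*} [TopologicalSpace α] [MeasurableSpace α] (μ : Measure α) : Set α :=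
  {x | ∀ U ∈ nhds x, μ U ≠ 0}

/-- The `S`-projection on `G`: minimizers over `G` of `z ↦ S(z-y,z-y)`. -/
def SProj {d : ℕ} (S : Matrix (Fin d) (Fin d) ℝ) (G : Set (Fin d → ℝ))
    (y : Fin d → ℝ) : Set (Fin d → ℝ) :=
  {x ∈ G | ∀ z ∈ G, Sb S (x - y) (x - y) ≤ Sb S (z - y) (z - y)}

/-- The inverse image of the projection: `P_G^{-1}(x) = {y : x ∈ P_G(y)}`. -/
def SProjInv {d : ℕ} (S : Matrix (Fin d) (Fin d) ℝ) (G : Set (Fin d → ℝ))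
    (x : Fin d → ℝ) : Set (Fin d → ℝ) :=
  {y | x ∈ SProj S G y}

/-- `Q_G(x) = ∪_{n ≥ 1} Q_G^{1/n}(x)`, where
`Q_G^ε(x) = {y ∈ P_G^{-1}(x) : x + ε (x - y) ∈ P_G^{-1}(x)}`. -/
def QG {d : ℕ} (S : Matrix (Fin d) (Fin d) ℝ) (G : Set (Fin d → ℝ))
    (x : Fin d → ℝ) : Set (Fin d → ℝ) :=
  ⋃ n : ℕ, {y ∈ SProjInv S G x |
    x + ((1 : ℝ) / (n + 1)) • (x - y) ∈ SProjInv S G x}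

/-! ### The bilinear form -/

section Algebra
variable {d : ℕ} {S : Matrix (Fin d) (Fin d) ℝ}

lemma Sb_add_left (x y z : Fin d → ℝ) : Sb S (x + y) z = Sb S x z + Sb S y z := by
  simp [Sb, add_dotProduct]

lemma Sb_add_right (x y z : Fin d → ℝ) : Sb S x (y + z) = Sb S x y + Sb S x z := by
  simp [Sb, mulVec_add, dotProduct_add]

lemma Sb_sub_left (x y z : Fin d → ℝ) : Sb S (x - y) z = Sb S x z - Sb S y z := by
  simp [Sb, sub_dotProduct]

lemma Sb_sub_right (x y z : Fin d → ℝ) : Sb S x (y - z) = Sb S x y - Sb S x z := by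
  simp [Sb, mulVec_sub, dotProduct_sub]

lemma Sb_smul_left (c : ℝ) (x y : Fin d → ℝ) : Sb S (c • x) y = c * Sb S x y := by
  simp [Sb]

lemma Sb_smul_right (c : ℝ) (x y : Fin d → ℝ) : Sb S x (c • y) = c * Sb S x y := by
  simp [Sb, mulVec_smul]

lemma Sb_zero_right (x : Fin d → ℝ) : Sb S x 0 = 0 := by
  simp [Sb]

lemma Sb_sum_right {ι : Type*} (s : Finset ι) (x : Fin d → ℝ) (f : ι → Fin d → ℝ) :
    Sb S x (∑ i ∈ s, f i) = ∑ i ∈ s, Sb S x (f i) := by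
  classical
  induction s using Finset.induction_on with
  | empty => simp [Sb_zero_right]
  | insert a s ha ih => simp [Finset.sum_insert ha, Sb_add_right, ih]

lemma Sb_comm (hS : S.IsHermitian) (x y : Fin d → ℝ) : Sb S x y = Sb S y x := by
  have h : Sᵀ = S := by simpa [conjTranspose_eq_transpose_of_trivial] using hS.eq
  unfold Sb
  rw [dotProduct_mulVec, ← mulVec_transpose, h, dotProduct_comm]

lemma continuous_Sb {α : Type*} [TopologicalSpace α] {f g : α → Fin d → ℝ}
    (hf : Continuous f) (hg : Continuous g) : Continuous fun a => Sb S (f a) (g a) := by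
  unfold Sb
  exact hf.dotProduct (continuous_const.matrix_mulVec hg)

lemma abs_Sb_le (b : Fin d → ℝ) : ∃ K : ℝ, ∀ u, |Sb S u b| ≤ K * ‖u‖ := by
  refine ⟨∑ i, |S.mulVec b i|, fun u => ?_⟩
  unfold Sb dotProduct
  refine (Finset.abs_sum_le_sum_abs _ _).trans ?_
  rw [Finset.sum_mul]
  refine Finset.sum_le_sum fun i _ => ?_
  rw [abs_mul, mul_comm]
  gcongr
  simpa using norm_le_pi_norm u i

/-- Spectral theorem: in suitable linear coordinates the quadratic form is diagonal. -/
lemma exists_diag (hS : S.IsHermitian) :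
    ∃ (L : (Fin d → ℝ) ≃ₗ[ℝ] (Fin d → ℝ)) (l : Fin d → ℝ),
      ∀ v, Sb S v v = ∑ i, l i * (L v i) ^ 2 := by
  set U : Matrix (Fin d) (Fin d) ℝ := hS.eigenvectorUnitary.1 with hU
  have h1 : star U * U = 1 := Unitary.coe_star_mul_self hS.eigenvectorUnitary
  have h2 : U * star U = 1 := Unitary.coe_mul_star_self hS.eigenvectorUnitary
  refine ⟨LinearEquiv.ofLinearMap (mulVecLin (star U)) (mulVecLin U) ?_ ?_, hS.eigenvalues,
    fun v => ?_⟩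
  · rw [← mulVecLin_mul, h1, mulVecLin_one]
  · rw [← mulVecLin_mul, h2, mulVecLin_one]
  · have h3 : S = U * diagonal hS.eigenvalues * star U := by
      have := hS.spectral_theorem
      rw [Unitary.conjStarAlgAut_apply] at this
      exact this
    have h4 : star U = Uᵀ := by
      rw [star_eq_conjTranspose, conjTranspose_eq_transpose_of_trivial]
    unfold Sb
    nth_rw 1 [h3]
    rw [← mulVec_mulVec, ← mulVec_mulVec, dotProduct_mulVec, ← mulVec_transpose, ← h4]
    simp only [dotProduct, mulVec_diagonal, LinearEquiv.coe_ofLinearMap, mulVecLin_apply]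
    exact Finset.sum_congr rfl fun i _ => by ring

/-- There is a projection `P` onto a subspace where the form is negative definite, such that
the form is nonnegative on the range of `1 - P`. -/
lemma exists_neg_proj (hS : S.IsHermitian) :
    ∃ P : (Fin d → ℝ) →ₗ[ℝ] (Fin d → ℝ), (∀ v, P (P v) = P v) ∧
      (∀ v, 0 ≤ Sb S (v - P v) (v - P v)) ∧
      ∃ c : ℝ, 0 < c ∧ ∀ v, P v = v → Sb S v v ≤ -(c * ‖v‖ ^ 2) := by
  classical
  obtain ⟨L, l, hL⟩ := exists_diag hS
  let M : (Fin d → ℝ) →ₗ[ℝ] (Fin d → ℝ) :=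
    LinearMap.pi fun i => (if l i < 0 then (1 : ℝ) else 0) • LinearMap.proj i
  have hM : ∀ v i, M v i = if l i < 0 then v i else 0 := fun v i => by
    by_cases h : l i < 0 <;> simp [M, h]
  refine ⟨L.symm.toLinearMap ∘ₗ M ∘ₗ L.toLinearMap, fun v => ?_, fun v => ?_, ?_⟩
  · simp only [LinearMap.comp_apply, LinearEquiv.coe_coe, LinearEquiv.apply_symm_apply]
    congr 1
    ext i
    simp only [hM]
    split_ifs <;> rfl
  · rw [hL]
    refine Finset.sum_nonneg fun i _ => ?_
    simp only [map_sub, LinearMap.comp_apply, LinearEquiv.coe_coe, LinearEquiv.apply_symm_apply,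
      Pi.sub_apply, hM]
    split_ifs with h
    · simp
    · exact mul_nonneg (not_lt.mp h) (sq_nonneg _)
  · obtain ⟨c, hc, hcl⟩ : ∃ c : ℝ, 0 < c ∧ ∀ i, l i < 0 → c ≤ -l i := by
      rcases isEmpty_or_nonempty (Fin d) with h | h
      · exact ⟨1, one_pos, fun i => h.elim i⟩
      · obtain ⟨i, hi⟩ := Finite.exists_min fun i => if l i < 0 then -l i else 1
        refine ⟨_, ?_, fun j hj => (hi j).trans (by simp [hj])⟩
        split_ifs <;> linarith
    let Lc := L.symm.toContinuousLinearEquiv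
    let K := ‖(Lc : (Fin d → ℝ) →L[ℝ] (Fin d → ℝ))‖ + 1
    have hK : 0 < K := by positivity
    refine ⟨c / K ^ 2, by positivity, fun v hv => ?_⟩
    have hv0 : ∀ i, ¬ l i < 0 → L v i = 0 := fun i hi => by
      have h5 : M (L v) = L v := by
        have := congrArg L hv
        simpa using this
      rw [← h5, hM, if_neg hi]
    have h6 : ‖v‖ ≤ K * ‖L v‖ := by
      have h7 := (Lc : (Fin d → ℝ) →L[ℝ] (Fin d → ℝ)).le_opNorm (L v)
      have h8 : (Lc : (Fin d → ℝ) →L[ℝ] (Fin d → ℝ)) (L v) = v := L.symm_apply_apply v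
      rw [h8] at h7
      refine h7.trans ?_
      gcongr
      simp [K]
    have h9 : ‖L v‖ ^ 2 ≤ ∑ i, (L v i) ^ 2 := by
      have h10 : ‖L v‖ ≤ √(∑ i, (L v i) ^ 2) := by
        refine (pi_norm_le_iff_of_nonneg (Real.sqrt_nonneg _)).2 fun i => ?_
        rw [Real.norm_eq_abs]
        refine Real.abs_le_sqrt ?_
        exact Finset.single_le_sum (f := fun i => (L v i) ^ 2) (fun i _ => sq_nonneg _)
          (Finset.mem_univ i)
      calc ‖L v‖ ^ 2 ≤ √(∑ i, (L v i) ^ 2) ^ 2 := by gcongr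
        _ = _ := Real.sq_sqrt (Finset.sum_nonneg fun i _ => sq_nonneg _)
    have h11 : Sb S v v ≤ -(c * ∑ i, (L v i) ^ 2) := by
      rw [hL, Finset.mul_sum, ← Finset.sum_neg_distrib]
      refine Finset.sum_le_sum fun i _ => ?_
      by_cases hi : l i < 0
      · nlinarith [hcl i hi, sq_nonneg (L v i)]
      · simp [hv0 i hi]
    have h12 : c / K ^ 2 * ‖v‖ ^ 2 ≤ c * ‖L v‖ ^ 2 := by
      rw [div_mul_eq_mul_div, div_le_iff₀ (by positivity)]
      nlinarith [mul_le_mul h6 h6 (norm_nonneg _) (by positivity)]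
    nlinarith

end Algebra

/-! ### Maximal monotone sets below a convex set -/

section Extension
variable {d : ℕ} {S : Matrix (Fin d) (Fin d) ℝ}

/-- A set of pairs `(a, s)` lying above the graph of the quadratic form `S(a,a)/2`. -/
def AboveQ (S : Matrix (Fin d) (Fin d) ℝ) (E : Set ((Fin d → ℝ) × ℝ)) : Prop :=
  ∀ e ∈ E, Sb S e.1 e.1 / 2 ≤ e.2

/-- Adding a point `(z, S(z,z)/2)` keeps the convex hull above the form as soon as the affine
minorant attached to `z` lies below `E`. -/
lemma AboveQ.convexHull_insert (hS : S.IsHermitian) {E : Set ((Fin d → ℝ) × ℝ)}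
    (hE : Convex ℝ E) (hne : E.Nonempty) (hA : AboveQ S E) {z : Fin d → ℝ}
    (hz : ∀ e ∈ E, Sb S z e.1 - Sb S z z / 2 ≤ e.2) :
    AboveQ S (convexHull ℝ (insert (z, Sb S z z / 2) E)) := by
  intro p hp
  rw [_root_.convexHull_insert hne, hE.convexHull_eq, mem_convexJoin] at hp
  obtain ⟨x, rfl, e, he, α, β, hα, hβ, hαβ, rfl⟩ := hp
  have h1 := hz e he
  have h2 := hA e he
  obtain rfl : α = 1 - β := by linarith
  simp only [Prod.fst_add, Prod.smul_fst, Prod.snd_add, Prod.smul_snd, smul_eq_mul,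
    Sb_add_left, Sb_add_right, Sb_smul_left, Sb_smul_right, Sb_comm hS e.1 z]
  nlinarith [mul_nonneg (mul_nonneg hα hβ) (sub_nonneg.2 h1),
    mul_nonneg (mul_nonneg hβ hβ) (sub_nonneg.2 h2)]

/-- Convexity above the form forces every contact point `z` to provide an affine minorant. -/
lemma AboveQ.minorant_of_mem (hS : S.IsHermitian) {E : Set ((Fin d → ℝ) × ℝ)}
    (hE : Convex ℝ E) (hA : AboveQ S E) {z : Fin d → ℝ} (hz : (z, Sb S z z / 2) ∈ E) :
    ∀ e ∈ E, Sb S z e.1 - Sb S z z / 2 ≤ e.2 := by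
  intro e he
  by_contra! hcon
  set A := Sb S z e.1 - Sb S z z / 2 - e.2 with hAdef
  have hA0 : 0 < A := by linarith
  -- the first-order expansion at `z` in the direction of `e` is violated for small `t`
  set B := Sb S z z / 2 - Sb S z e.1 + Sb S e.1 e.1 / 2 with hB
  set t := A / (A + |B|) with ht
  have hden : 0 < A + |B| := by positivity
  have ht0 : 0 < t := by positivity
  have ht1 : t ≤ 1 := by rw [ht, div_le_one hden]; linarith [abs_nonneg B]
  have h1 := hA _ (hE hz he (sub_nonneg.2 ht1) ht0.le (by ring))
  simp only [Prod.fst_add, Prod.smul_fst, Prod.snd_add, Prod.smul_snd, smul_eq_mul,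
    Sb_add_left, Sb_add_right, Sb_smul_left, Sb_smul_right, Sb_comm hS e.1 z] at h1
  have h2 : t * (A + t * B) ≤ 0 := by
    rw [hAdef, hB]; nlinarith
  have h3 : A + t * B ≤ 0 := by
    by_contra! h; nlinarith [mul_pos ht0 h]
  have h4 : t * (A + |B|) = A := by rw [ht]; field_simp
  have h5 : -(t * |B|) ≤ t * B := by nlinarith [neg_abs_le B]
  nlinarith [mul_pos ht0 hA0]

/-- The Kirszbraun-type step: on the slice through `w` along the negative directions there is
a point whose affine minorant lies below the convex set `E`. For finitely many points of `E`
it is a saddle point; compactness of the slices handles the whole of `E`. -/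
lemma AboveQ.exists_minorant (hS : S.IsHermitian) {P : (Fin d → ℝ) →ₗ[ℝ] (Fin d → ℝ)}
    (hPP : ∀ v, P (P v) = P v) (hPpos : ∀ v, 0 ≤ Sb S (v - P v) (v - P v))
    {c : ℝ} (hc : 0 < c) (hPneg : ∀ v, P v = v → Sb S v v ≤ -(c * ‖v‖ ^ 2))
    {E : Set ((Fin d → ℝ) × ℝ)}
    (hE : Convex ℝ E) (hne : E.Nonempty) (hA : AboveQ S E) (w : Fin d → ℝ) :
    ∃ z, P (z - w) = z - w ∧ ∀ e ∈ E, Sb S z e.1 - Sb S z z / 2 ≤ e.2 := by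
  classical
  have hPc : Continuous P := P.continuous_of_finiteDimensional
  set Φ : (Fin d → ℝ) → ((Fin d → ℝ) × ℝ) → ℝ := fun z e => Sb S z e.1 - Sb S z z / 2 - e.2
    with hΦ
  have hΦc : ∀ e, Continuous fun z => Φ z e := fun e =>
    ((continuous_Sb continuous_id continuous_const).sub
      ((continuous_Sb continuous_id continuous_id).div_const 2)).sub continuous_const
  have hΦc' : ∀ z, Continuous fun e => Φ z e := fun z =>
    ((continuous_Sb continuous_const continuous_fst).sub continuous_const).sub continuous_snd
  let Z : ((Fin d → ℝ) × ℝ) → Set (Fin d → ℝ) := fun e => {z | P (z - w) = z - w ∧ Φ z e ≤ 0}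
  have hZclosed : ∀ e, IsClosed (Z e) := fun e =>
    (isClosed_eq (hPc.comp (continuous_id.sub continuous_const))
      (continuous_id.sub continuous_const)).inter (isClosed_le (hΦc e) continuous_const)
  have hZcpt : ∀ e, IsCompact (Z e) := fun e => by
    obtain ⟨K, hK⟩ := abs_Sb_le (S := S) (e.1 - w)
    set C := Φ w e with hC
    refine Metric.isCompact_of_isClosed_isBounded (hZclosed e) ?_
    refine (Metric.isBounded_closedBall (x := w)
      (r := (2 * |K| + 2 * |C|) / c + 1)).subset fun z hz => ?_
    obtain ⟨hz1, hz2⟩ := hz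
    rw [Metric.mem_closedBall, dist_eq_norm]
    obtain ⟨u, rfl⟩ : ∃ u, z = w + u := ⟨z - w, by simp⟩
    rw [add_sub_cancel_left] at hz1 ⊢
    have h1 := hPneg u hz1
    have h2 := hK u
    have h3 : Φ (w + u) e = C + Sb S u (e.1 - w) - Sb S u u / 2 := by
      simp only [hC, hΦ, Sb_add_left, Sb_add_right, Sb_sub_right, Sb_comm hS w u]; ring
    have h4 : c / 2 * ‖u‖ ^ 2 ≤ |K| * ‖u‖ + |C| := by
      have := neg_abs_le (Sb S u (e.1 - w))
      have := neg_abs_le C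
      have := mul_le_mul_of_nonneg_right (le_abs_self K) (norm_nonneg u)
      nlinarith
    by_contra! hcon
    have h5 : 1 ≤ ‖u‖ := by
      have : 0 ≤ (2 * |K| + 2 * |C|) / c := by positivity
      linarith
    have h6 : 2 * |K| + 2 * |C| < c * ‖u‖ := by
      rw [← div_lt_iff₀' hc]; linarith
    nlinarith [abs_nonneg K, abs_nonneg C, mul_nonneg (abs_nonneg C) (sub_nonneg.2 h5)]
  -- the point of the slice whose difference to `e.1` is annihilated by `P`, so that the form is
  -- nonnegative there and `Φ` is at most `0`
  let ζ : ((Fin d → ℝ) × ℝ) → (Fin d → ℝ) := fun e => w - P (w - e.1)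
  have hζc : Continuous ζ :=
    continuous_const.sub (hPc.comp (continuous_const.sub continuous_fst))
  have hζP : ∀ e, P (ζ e - w) = ζ e - w := fun e => by
    simp only [ζ, sub_sub_cancel_left, map_neg, hPP]
  have hζΦ : ∀ e ∈ E, Φ (ζ e) e ≤ 0 := fun e he => by
    have h1 := hA e he
    have h2 := hPpos (w - e.1)
    have h3 : Φ (ζ e) e = (Sb S e.1 e.1 / 2 - e.2)
        - Sb S (w - e.1 - P (w - e.1)) (w - e.1 - P (w - e.1)) / 2 := by
      simp only [hΦ, ζ, Sb_sub_left, Sb_sub_right, Sb_comm hS e.1 w,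
        Sb_comm hS (P (w - e.1)) w, Sb_comm hS e.1 (P (w - e.1))]; ring
    linarith
  -- Sion's theorem: `Φ` is convex in the slice variable and affine in `e`
  have hfin : ∀ F : Finset ((Fin d → ℝ) × ℝ), F.Nonempty → (F : Set _) ⊆ E →
      ∃ z, ∀ e ∈ F, z ∈ Z e := by
    intro F hF hFE
    set Y := convexHull ℝ (F : Set ((Fin d → ℝ) × ℝ)) with hY
    have hYE : Y ⊆ E := convexHull_min hFE hE
    have kY : IsCompact Y := F.finite_toSet.isCompact_convexHull ℝ
    have cY : Convex ℝ Y := convex_convexHull ℝ _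
    have nY : Y.Nonempty := (convexHull_nonempty_iff (𝕜 := ℝ)).2 (by simpa using hF)
    have cX : Convex ℝ (ζ '' Y) := by
      rintro _ ⟨a, ha, rfl⟩ _ ⟨b, hb, rfl⟩ s t hs ht hst
      refine ⟨s • a + t • b, cY ha hb hs ht hst, ?_⟩
      obtain rfl : s = 1 - t := by linarith
      simp only [ζ, Prod.fst_add, Prod.smul_fst, map_sub, map_add, map_smul]
      module
    obtain ⟨z, ⟨y0, hy0, rfl⟩, b, hb, hab⟩ :=
      Sion.exists_isSaddlePointOn (f := Φ) (nY.image ζ) cX (kY.image hζc)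
      (fun e _ => (hΦc e).lowerSemicontinuous.lowerSemicontinuousOn _)
      (fun e _ => by
        refine ConvexOn.quasiconvexOn ⟨cX, ?_⟩
        rintro _ ⟨x, hx, rfl⟩ _ ⟨y, hy, rfl⟩ s t hs ht hst
        have h1 := hPneg (ζ x - ζ y) (by
          have : ζ x - ζ y = (ζ x - w) - (ζ y - w) := by abel
          rw [this, map_sub, hζP, hζP])
        obtain rfl : s = 1 - t := by linarith
        have h2 : Sb S (ζ x - ζ y) (ζ x - ζ y) ≤ 0 :=
          h1.trans (neg_nonpos.2 (by positivity))
        generalize ζ x = x at *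
        generalize ζ y = y at *
        simp only [hΦ, smul_eq_mul, Sb_add_left, Sb_add_right, Sb_smul_left, Sb_smul_right,
          Sb_sub_left, Sb_sub_right, Sb_comm hS y x] at h2 ⊢
        nlinarith [mul_nonneg (mul_nonneg hs ht) (neg_nonneg.2 h2)])
      cY nY kY
      (fun z _ => (hΦc' z).upperSemicontinuous.upperSemicontinuousOn _)
      (fun z _ => by
        refine ConcaveOn.quasiconcaveOn ⟨cY, ?_⟩
        intro x hx y hy s t hs ht hst
        refine le_of_eq ?_
        obtain rfl : s = 1 - t := by linarith
        simp only [hΦ, smul_eq_mul, Sb_add_right, Sb_smul_right, Prod.fst_add, Prod.smul_fst,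
          Prod.snd_add, Prod.smul_snd]
        ring)
    exact ⟨ζ y0, fun e he => ⟨hζP y0,
      (hab (ζ b) ⟨b, hb, rfl⟩ e (subset_convexHull ℝ _ he)).trans (hζΦ b (hYE hb))⟩⟩
  obtain ⟨e0, he0⟩ := hne
  obtain ⟨z, hz0, hz⟩ := (hZcpt e0).inter_iInter_nonempty (fun e : E => Z e)
    (fun e => hZclosed e) (fun u => by
      obtain ⟨z, hz⟩ := hfin (insert e0 (u.image Subtype.val)) (by simp) (by
        intro e he
        simp only [Finset.coe_insert, Finset.coe_image, Set.mem_insert_iff, Set.mem_image] at he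
        rcases he with rfl | ⟨x, -, rfl⟩
        · exact he0
        · exact x.2)
      refine ⟨z, hz e0 (by simp), ?_⟩
      simp only [Set.mem_iInter]
      intro e he
      exact hz e (Finset.mem_insert_of_mem (Finset.mem_image_of_mem _ he)))
  refine ⟨z, hz0.1, fun e he => ?_⟩
  have := (Set.mem_iInter.1 hz ⟨e, he⟩).2
  simp only [hΦ] at this
  linarith

/-- Every convex set above the form lies above the Fitzpatrick function of some maximal
monotone set: the contact set of a maximal convex extension. -/
lemma exists_maxSMono (hS : S.IsHermitian) {E₀ : Set ((Fin d → ℝ) × ℝ)}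
    (hE₀ : Convex ℝ E₀) (hne : E₀.Nonempty) (hA₀ : AboveQ S E₀) :
    ∃ H, MaxSMono S H ∧ ∀ z ∈ H, ∀ e ∈ E₀, Sb S z e.1 - Sb S z z / 2 ≤ e.2 := by
  -- by maximality `E` contains every `(z, S(z,z)/2)` whose affine minorant lies below `E`
  obtain ⟨E, hE₀E, ⟨hE, hA⟩, hmax⟩ := zorn_subset_nonempty
    {E | Convex ℝ E ∧ AboveQ S E} (fun C hC hchain _ =>
      ⟨⋃₀ C, ⟨hchain.directedOn.convex_sUnion fun _ hs => (hC hs).1,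
        fun e ⟨s, hs, he⟩ => (hC hs).2 e he⟩, fun s hs => Set.subset_sUnion_of_mem hs⟩)
    E₀ ⟨hE₀, hA₀⟩
  have hneE : E.Nonempty := hne.mono hE₀E
  have hmin := fun z (hz : (z, Sb S z z / 2) ∈ E) => hA.minorant_of_mem hS hE hz
  obtain ⟨P, hPP, hPpos, c, hc, hPneg⟩ := exists_neg_proj hS
  refine ⟨{z | (z, Sb S z z / 2) ∈ E}, ⟨fun x hx y hy => ?_, fun K hK hHK => ?_⟩,
    fun z hz e he => hmin z hz e (hE₀E he)⟩
  · have h1 := hmin x hx _ hy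
    have h2 := hmin y hy _ hx
    simp only at h1 h2
    simp only [Sb_sub_left, Sb_sub_right]
    linarith
  -- maximality: on the negative slice through `w` lies a contact point `z`, and monotonicity of a
  -- larger set containing `w` and `z` forces `w = z`
  · refine Set.Subset.antisymm (fun w hw => ?_) hHK
    obtain ⟨z, hzw, hz⟩ := hA.exists_minorant hS hPP hPpos hc hPneg hE hneE w
    have hzE : (z, Sb S z z / 2) ∈ E := by
      refine hmax ⟨convex_convexHull ℝ _, hA.convexHull_insert hS hE hneE hz⟩
        ((Set.subset_insert _ _).trans (subset_convexHull ℝ _)) ?_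
      exact subset_convexHull ℝ _ (Set.mem_insert _ _)
    have h1 := hK z (hHK hzE) w hw
    have h2 := hPneg _ hzw
    have h3 : ‖z - w‖ = 0 := by
      by_contra h
      have : 0 < ‖z - w‖ := lt_of_le_of_ne (norm_nonneg _) (Ne.symm h)
      have := mul_pos hc (pow_pos this 2)
      linarith
    rw [norm_eq_zero, sub_eq_zero] at h3
    exact h3 ▸ hzE

end Extension

/-! ### Prices for the splitting problem -/

section Certificate
variable {d : ℕ} {S : Matrix (Fin d) (Fin d) ℝ}

/-- Lagrange multipliers for the splitting problem: if `v` bounds the value of every splitting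
of the weight vector `g` into multiples of probability vectors, then there are prices `f` with
total cost `v` that dominate the form at all barycenters. This is the M. Riesz extension
theorem for the cone generated by the hypograph of the gain function. -/
lemma exists_prices {ι : Type*} [Fintype ι] (y : ι → Fin d → ℝ) (g : ι → ℝ)
    (hg : ∀ i, 0 < g i) (hg1 : ∑ i, g i = 1) (v : ℝ)
    (hopt : ∀ (s : Finset (stdSimplex ℝ ι)) (c : stdSimplex ℝ ι → ℝ), (∀ w, 0 ≤ c w) →
      ∑ w ∈ s, c w • (w : ι → ℝ) = g →
      ∑ w ∈ s, c w * (Sb S (∑ i, w.1 i • y i) (∑ i, w.1 i • y i) / 2) ≤ v) :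
    ∃ f : ι → ℝ, ∑ i, g i * f i = v ∧
      ∀ w ∈ stdSimplex ℝ ι, Sb S (∑ i, w i • y i) (∑ i, w i • y i) / 2 ≤ ∑ i, w i * f i := by
  classical
  set Q : (ι → ℝ) → ℝ := fun w => Sb S (∑ i, w i • y i) (∑ i, w i • y i) / 2 with hQ
  let gen : stdSimplex ℝ ι → (ι → ℝ) × ℝ := fun w => (w.1, Q w.1)
  let C : PointedCone ℝ ((ι → ℝ) × ℝ) :=
    PointedCone.hull ℝ (Set.range gen) ⊔ PointedCone.hull ℝ {((0 : ι → ℝ), (-1 : ℝ))}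
  have hgenC : ∀ w, gen w ∈ C := fun w =>
    Submodule.mem_sup_left (Submodule.subset_span ⟨w, rfl⟩)
  have hnegC : ((0 : ι → ℝ), (-1 : ℝ)) ∈ C :=
    Submodule.mem_sup_right (Submodule.subset_span rfl)
  have hsmul : ∀ (t : ℝ) (x : (ι → ℝ) × ℝ), 0 ≤ t → x ∈ C → t • x ∈ C := fun t x ht hx =>
    C.smul_mem ht hx
  -- elements of the cone are splittings whose value is lowered by some `b ≥ 0`
  have hmem : ∀ x ∈ C, ∃ (s : Finset (stdSimplex ℝ ι)) (c : stdSimplex ℝ ι → ℝ) (b : ℝ),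
      (∀ w, 0 ≤ c w) ∧ 0 ≤ b ∧ x.1 = ∑ w ∈ s, c w • (w : ι → ℝ) ∧
      x.2 = ∑ w ∈ s, c w * Q w.1 - b := by
    intro x hx
    obtain ⟨a, ha, b, hb, rfl⟩ := Submodule.mem_sup.1 hx
    obtain ⟨c, rfl⟩ := Finsupp.mem_span_range_iff_exists_finsupp.1 ha
    obtain ⟨t, rfl⟩ := Submodule.mem_span_singleton.1 hb
    refine ⟨c.support, fun w => c w, t, fun w => (c w).2, t.2, ?_, ?_⟩
    · simp [Finsupp.sum, Prod.fst_sum, gen]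
      rfl
    · have hs : ∀ (t : {t : ℝ // 0 ≤ t}) (r : ℝ), t • r = (t : ℝ) * r := fun _ _ => rfl
      simp [Finsupp.sum, Prod.snd_sum, gen, sub_eq_add_neg, hs]
  -- prescribed values on the plane spanned by `(g, 0)` and `(0, 1)`
  let l : ((ι → ℝ) × ℝ) →ₗ[ℝ] ℝ :=
    v • (∑ i, LinearMap.proj i ∘ₗ LinearMap.fst ℝ (ι → ℝ) ℝ) - LinearMap.snd ℝ (ι → ℝ) ℝ
  have hl : ∀ x, l x = v * ∑ i, x.1 i - x.2 := fun x => by simp [l]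
  let p : Submodule ℝ ((ι → ℝ) × ℝ) := (Submodule.span ℝ {g}).prod ⊤
  obtain ⟨L, hLp, hLC⟩ := riesz_extension C (LinearPMap.mk p (l ∘ₗ p.subtype)) (by
      rintro ⟨⟨x, r⟩, hx⟩ hxC
      obtain ⟨a, rfl⟩ := Submodule.mem_span_singleton.1 hx.1
      obtain ⟨s, c, b, hc, hb, h1, h2⟩ := hmem _ hxC
      simp only at h1 h2
      change 0 ≤ l (a • g, r)
      have hsum : a = ∑ w ∈ s, c w := by
        have h3 := congrArg (fun u : ι → ℝ => ∑ i, u i) h1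
        simp only [Pi.smul_apply, smul_eq_mul, ← Finset.mul_sum, hg1, Finset.sum_apply] at h3
        rw [Finset.sum_comm] at h3
        simp only [← Finset.mul_sum] at h3
        simpa using h3
      rw [hl]
      simp only [Pi.smul_apply, smul_eq_mul, ← Finset.mul_sum, hg1, mul_one]
      have ha : 0 ≤ a := hsum ▸ Finset.sum_nonneg fun w _ => hc w
      rcases ha.eq_or_lt with ha | ha
      · have h4 : ∀ w ∈ s, c w = 0 :=
          (Finset.sum_eq_zero_iff_of_nonneg fun w _ => hc w).1 (by rw [← hsum, ← ha])
        rw [Finset.sum_eq_zero fun w hw => by rw [h4 w hw, zero_mul]] at h2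
        rw [← ha]; linarith
      · have h5 := hopt s (fun w => a⁻¹ * c w) (fun w => mul_nonneg (by positivity) (hc w)) (by
          simp only [mul_smul, ← Finset.smul_sum, ← h1]
          rw [smul_smul, inv_mul_cancel₀ ha.ne', one_smul])
        simp only [mul_assoc, ← Finset.mul_sum] at h5
        rw [inv_mul_le_iff₀ ha] at h5
        simp only [hQ] at h2
        linarith)
    (by
      rintro ⟨w, r⟩
      -- shift by a large multiple of `g` to reach the positive orthant, then go far down
      obtain ⟨a, ha⟩ : ∃ a : ℝ, ∀ i, 0 < w i + a * g i := by
        refine ⟨∑ i, |w i| / g i + 1, fun i => ?_⟩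
        have h1 : |w i| / g i ≤ ∑ j, |w j| / g j :=
          Finset.single_le_sum (f := fun j => |w j| / g j)
            (fun j _ => div_nonneg (abs_nonneg _) (hg j).le) (Finset.mem_univ i)
        rw [div_le_iff₀ (hg i)] at h1
        nlinarith [neg_abs_le (w i), hg i]
      set u : ι → ℝ := fun i => w i + a * g i with hu
      have hne : Nonempty ι := by
        by_contra h
        rw [not_nonempty_iff] at h
        simp at hg1
      set t := ∑ i, u i with ht
      have ht0 : 0 < t := Finset.sum_pos (fun i _ => ha i) Finset.univ_nonempty
      let W : stdSimplex ℝ ι := ⟨t⁻¹ • u, fun i => mul_nonneg (by positivity) (ha i).le, by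
        simp only [Pi.smul_apply, smul_eq_mul, ← Finset.mul_sum]
        exact inv_mul_cancel₀ ht0.ne'⟩
      refine ⟨⟨(a • g, t * Q W.1 - r), ⟨Submodule.mem_span_singleton.2 ⟨a, rfl⟩, trivial⟩⟩, ?_⟩
      have h2 := hsmul t _ ht0.le (hgenC W)
      convert h2 using 1
      ext i
      · simp [gen, W, hu, mul_inv_cancel_left₀ ht0.ne']; ring
      · simp [gen])
  -- the extension is `(w, r) ↦ ∑ w i * f i - r` with `f i` its value at the `i`-th unit vector
  have hL : ∀ w r, L (w, r) = (∑ i, w i * L (Pi.single i 1, 0)) - r := by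
    intro w r
    have h1 : L (0, 1) = -1 := by
      have := hLp ⟨(0, 1), ⟨Submodule.zero_mem _, trivial⟩⟩
      refine this.trans ?_
      change l (0, 1) = -1
      simp [hl]
    have h2 : (w, r) = (∑ i, w i • ((Pi.single i 1 : ι → ℝ), (0 : ℝ))) + r • ((0 : ι → ℝ), (1 : ℝ)) := by
      ext i
      · simp [Prod.fst_sum, Finset.sum_apply, Pi.single_apply]
      · simp [Prod.snd_sum]
    rw [h2, map_add, map_sum, map_smul, h1]
    simp only [map_smul, smul_eq_mul]
    ring
  refine ⟨fun i => L (Pi.single i 1, 0), ?_, fun w hw => ?_⟩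
  · have h1 := hLp ⟨(g, 0), ⟨Submodule.mem_span_singleton_self g, trivial⟩⟩
    have h2 : L (g, 0) = v := by
      refine h1.trans ?_
      change l (g, 0) = v
      simp [hl, hg1]
    rw [hL] at h2
    linarith
  · have h1 := hLC _ (hgenC ⟨w, hw⟩)
    change 0 ≤ L (w, Q w) at h1
    rw [hL] at h1
    simpa [hQ] using h1

end Certificate

/-! ### Discrete weak duality -/

section Duality
variable {d : ℕ} {S : Matrix (Fin d) (Fin d) ℝ}

/-- A point outside a maximal monotone set is separated from it; in every case some point of
the set has nonpositive form distance. -/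
lemma MaxSMono.exists_le {H : Set (Fin d → ℝ)} (hH : MaxSMono S H)
    (x : Fin d → ℝ) : ∃ z ∈ H, Sb S (z - x) (z - x) ≤ 0 ∧ (x ∉ H → Sb S (z - x) (z - x) < 0) := by
  by_cases hx : x ∈ H
  · exact ⟨x, hx, by simp [Sb_zero_right], fun h => absurd hx h⟩
  · by_contra! hcon
    refine hx ?_
    have h1 : ∀ z ∈ H, 0 ≤ Sb S (z - x) (z - x) := fun z hz => by
      by_contra! h
      exact absurd ((hcon z hz h.le).2) (not_le.2 h)
    have h2 : ∀ z ∈ H, 0 ≤ Sb S (x - z) (x - z) := fun z hz => by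
      have := h1 z hz
      simp only [Sb_sub_left, Sb_sub_right] at this ⊢
      linarith
    have h3 : SMono S (insert x H) := by
      rintro a (rfl | ha) b (rfl | hb)
      · simp [Sb_zero_right]
      · exact h2 b hb
      · exact h1 a ha
      · exact hH.1 a ha b hb
    rw [← hH.2 _ h3 (Set.subset_insert _ _)]
    exact Set.mem_insert _ _

/-- Discrete martingale property of the weights `c` at the points `(X i, Y i)`: each `x` is the
barycenter of the `Y i` with `X i = x`. -/
def DMart {ι : Type*} (s : Finset ι) (c : ι → ℝ) (X Y : ι → Fin d → ℝ) : Prop :=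
  ∀ φ : (Fin d → ℝ) → ℝ, ∑ i ∈ s, (c i * φ (X i)) • (Y i - X i) = 0

lemma DMart.sum_Sb {ι : Type*} {s : Finset ι} {c : ι → ℝ} {X Y : ι → Fin d → ℝ}
    (h : DMart s c X Y) (φ : (Fin d → ℝ) → Fin d → ℝ) :
    ∑ i ∈ s, c i * Sb S (φ (X i)) (Y i - X i) = 0 := by
  have h1 : ∀ j, ∑ i ∈ s, Sb S (Pi.single j 1) ((c i * φ (X i) j) • (Y i - X i)) = 0 := fun j => by
    rw [← Sb_sum_right, h fun x => φ x j, Sb_zero_right]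
  have h2 : ∀ i, c i * Sb S (φ (X i)) (Y i - X i)
      = ∑ j, Sb S (Pi.single j 1) ((c i * φ (X i) j) • (Y i - X i)) := fun i => by
    simp only [Sb, single_one_dotProduct, mulVec_smul, Pi.smul_apply, smul_eq_mul]
    simp only [dotProduct, Finset.mul_sum, mul_assoc]
  simp only [h2]
  rw [Finset.sum_comm]
  exact Finset.sum_eq_zero fun j _ => h1 j

/-- Weak duality with its equality case, for finitely many points. The choice of a point `z x` of
`H` with `S(z x - x, z x - x) ≤ 0`, strict off `H`, writes the duality gap as a sum of nonnegative
terms. -/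
lemma DMart.weak_duality (hS : S.IsHermitian) {ι : Type*} {s : Finset ι} {c : ι → ℝ}
    {X Y : ι → Fin d → ℝ} (hc : ∀ i ∈ s, 0 < c i) (h : DMart s c X Y)
    {H : Set (Fin d → ℝ)} (hH : MaxSMono S H) {F : ι → ℝ}
    (hF : ∀ i ∈ s, ∀ z ∈ H, Sb S z (Y i) - Sb S z z / 2 ≤ F i) :
    1 / 2 * ∑ i ∈ s, c i * Sb S (X i) (Y i) ≤ ∑ i ∈ s, c i * F i ∧
    (∑ i ∈ s, c i * F i ≤ 1 / 2 * ∑ i ∈ s, c i * Sb S (X i) (Y i) →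
      ∀ i ∈ s, X i ∈ H ∧ F i = Sb S (X i) (Y i) - Sb S (X i) (X i) / 2) := by
  choose z hzH hz0 hzlt using hH.exists_le
  have e1 : ∑ i ∈ s, c i * Sb S (X i) (Y i) = ∑ i ∈ s, c i * Sb S (X i) (X i) := by
    have := h.sum_Sb (S := S) fun x => x
    simp only [Sb_sub_right, mul_sub, Finset.sum_sub_distrib] at this
    linarith
  have e2 : ∑ i ∈ s, c i * Sb S (z (X i)) (Y i) = ∑ i ∈ s, c i * Sb S (z (X i)) (X i) := by
    have := h.sum_Sb (S := S) z
    simp only [Sb_sub_right, mul_sub, Finset.sum_sub_distrib] at this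
    linarith
  -- the duality gap is a sum of two nonnegative contributions
  have gap : ∑ i ∈ s, c i * F i - 1 / 2 * ∑ i ∈ s, c i * Sb S (X i) (Y i) =
      ∑ i ∈ s, c i * ((F i - (Sb S (z (X i)) (Y i) - Sb S (z (X i)) (z (X i)) / 2)) +
        (- Sb S (z (X i) - X i) (z (X i) - X i) / 2)) := by
    have e3 : ∀ i, c i * ((F i - (Sb S (z (X i)) (Y i) - Sb S (z (X i)) (z (X i)) / 2)) +
        (- Sb S (z (X i) - X i) (z (X i) - X i) / 2)) =
        c i * F i - c i * Sb S (z (X i)) (Y i) + c i * Sb S (z (X i)) (X i)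
          - 1 / 2 * (c i * Sb S (X i) (X i)) := fun i => by
      simp only [Sb_sub_left, Sb_sub_right, Sb_comm hS (X i) (z (X i))]; ring
    simp only [e3, Finset.sum_sub_distrib, Finset.sum_add_distrib, e2, e1, ← Finset.mul_sum]
    ring
  have hnn : ∀ i ∈ s, 0 ≤ c i * ((F i - (Sb S (z (X i)) (Y i) - Sb S (z (X i)) (z (X i)) / 2)) +
        (- Sb S (z (X i) - X i) (z (X i) - X i) / 2)) := fun i hi => by
    have := hF i hi _ (hzH (X i))
    have := hz0 (X i)
    exact mul_nonneg (hc i hi).le (by linarith)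
  refine ⟨by linarith [Finset.sum_nonneg hnn], fun hle i hi => ?_⟩
  -- with equality all contributions vanish, so the first coordinates belong to `H`
  have hXall : ∀ j ∈ s, X j ∈ H := fun j hj => by
    by_contra hX
    have := hzlt (X j) hX
    have := hF j hj _ (hzH (X j))
    have := (Finset.sum_eq_zero_iff_of_nonneg hnn).1
      (le_antisymm (by linarith) (Finset.sum_nonneg hnn)) j hj
    have := (mul_eq_zero.1 this).resolve_left (hc j hj).ne'
    linarith
  -- hence `X j` itself may be used in place of the selected point
  have gap' : ∑ i ∈ s, c i * (F i - (Sb S (X i) (Y i) - Sb S (X i) (X i) / 2)) ≤ 0 := by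
    have e4 : ∀ i, c i * (F i - (Sb S (X i) (Y i) - Sb S (X i) (X i) / 2)) =
        c i * F i - c i * Sb S (X i) (Y i) + 1 / 2 * (c i * Sb S (X i) (X i)) := fun i => by ring
    simp only [e4, Finset.sum_sub_distrib, Finset.sum_add_distrib, ← Finset.mul_sum]
    linarith
  have hnn' : ∀ j ∈ s, 0 ≤ c j * (F j - (Sb S (X j) (Y j) - Sb S (X j) (X j) / 2)) := fun j hj =>
    mul_nonneg (hc j hj).le (sub_nonneg.2 (hF j hj _ (hXall j hj)))
  have h7 := (Finset.sum_eq_zero_iff_of_nonneg hnn').1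
    (le_antisymm gap' (Finset.sum_nonneg hnn')) i hi
  have h8 := (mul_eq_zero.1 h7).resolve_left (hc i hi).ne'
  exact ⟨hXall i hi, by linarith⟩

end Duality

section EInt
variable {d : ℕ}

/-- The extended integral against a discrete measure is the weighted sum when the integrand is
finite at the atoms. -/
lemma eInt_real {ι : Type*} {s : Finset ι} {c : ι → ℝ} {Y : ι → Fin d → ℝ}
    (hc : ∀ i ∈ s, 0 < c i) {ψ : (Fin d → ℝ) → EReal} {F : ι → ℝ}
    (hF : ∀ i ∈ s, ψ (Y i) = (F i : EReal)) :
    eInt (∑ i ∈ s, ENNReal.ofReal (c i) • Measure.dirac (Y i)) ψ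
      = ((∑ i ∈ s, c i * F i : ℝ) : EReal) := by
  have hint : ∀ (h : (Fin d → ℝ) → ENNReal) (a : ι → ℝ),
      (∀ i ∈ s, h (Y i) = ENNReal.ofReal (a i)) → (∀ i, 0 ≤ a i) →
      ∫⁻ y, h y ∂(∑ i ∈ s, ENNReal.ofReal (c i) • Measure.dirac (Y i))
        = ENNReal.ofReal (∑ i ∈ s, c i * a i) := by
    intro h a ha ha0
    rw [lintegral_finsetSum_measure, ENNReal.ofReal_sum_of_nonneg
      (fun i hi => mul_nonneg (hc i hi).le (ha0 i))]
    refine Finset.sum_congr rfl fun i hi => ?_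
    rw [lintegral_smul_measure, lintegral_dirac, ha i hi, ENNReal.ofReal_mul (hc i hi).le]
    rfl
  unfold eInt
  rw [hint _ (fun i => max (F i) 0) (fun i hi => by simp [epos, hF i hi]) (fun i => le_max_right _ _),
    hint _ (fun i => max (-F i) 0) (fun i hi => by
      rw [hF i hi, ← EReal.coe_neg, epos, if_neg (EReal.coe_ne_top _), EReal.toReal_coe]; simp)
      (fun i => le_max_right _ _)]
  rw [EReal.coe_ennreal_ofReal, EReal.coe_ennreal_ofReal, max_eq_left, max_eq_left,
    ← EReal.coe_sub, ← Finset.sum_sub_distrib]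
  · congr 1
    refine Finset.sum_congr rfl fun i _ => ?_
    rw [← mul_sub]
    congr 1
    rcases le_total (F i) 0 with h | h
    · rw [max_eq_right h, max_eq_left (by linarith)]; ring
    · rw [max_eq_left h, max_eq_right (by linarith)]; ring
  all_goals exact Finset.sum_nonneg fun i hi => mul_nonneg (hc i hi).le (le_max_right _ _)

lemma eInt_top {ι : Type*} {s : Finset ι} {c : ι → ℝ} {Y : ι → Fin d → ℝ}
    (hc : ∀ i ∈ s, 0 < c i) {ψ : (Fin d → ℝ) → EReal} (hbot : ∀ y, ψ y ≠ ⊥)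
    {i : ι} (hi : i ∈ s) (htop : ψ (Y i) = ⊤) :
    eInt (∑ i ∈ s, ENNReal.ofReal (c i) • Measure.dirac (Y i)) ψ = ⊤ := by
  unfold eInt
  have h1 : ∫⁻ y, epos (ψ y) ∂(∑ i ∈ s, ENNReal.ofReal (c i) • Measure.dirac (Y i)) = ⊤ := by
    rw [lintegral_finsetSum_measure, ENNReal.sum_eq_top]
    refine ⟨i, hi, ?_⟩
    rw [lintegral_smul_measure, lintegral_dirac, htop]
    simp [epos, ENNReal.mul_top, hc i hi]
  have h2 : ∫⁻ y, epos (-ψ y) ∂(∑ i ∈ s, ENNReal.ofReal (c i) • Measure.dirac (Y i)) ≠ ⊤ := by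
    rw [lintegral_finsetSum_measure]
    refine ENNReal.sum_ne_top.2 fun j _ => ?_
    rw [lintegral_smul_measure, lintegral_dirac, epos, if_neg (by simpa using hbot (Y j))]
    exact ENNReal.mul_ne_top ENNReal.ofReal_ne_top ENNReal.ofReal_ne_top
  rw [h1]
  lift (∫⁻ y, epos (-ψ y) ∂(∑ i ∈ s, ENNReal.ofReal (c i) • Measure.dirac (Y i))) to NNReal
    using h2 with a
  rfl

end EInt

section Fitz
variable {d : ℕ} {S : Matrix (Fin d) (Fin d) ℝ}

lemma MaxSMono.nonempty {H : Set (Fin d → ℝ)} (hH : MaxSMono S H) : H.Nonempty := by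
  by_contra h
  rw [Set.not_nonempty_iff_eq_empty] at h
  have := hH.2 {0} (by rintro x rfl y rfl; simp [Sb_zero_right]) (by simp [h])
  simp [h] at this

lemma fitz_le_iff {H : Set (Fin d → ℝ)} {y : Fin d → ℝ} {r : ℝ} :
    fitz S H y ≤ (r : EReal) ↔ ∀ z ∈ H, Sb S z y - Sb S z z / 2 ≤ r := by
  simp only [fitz, iSup_le_iff, EReal.coe_le_coe_iff]

lemma fitz_ne_bot {H : Set (Fin d → ℝ)} (hH : MaxSMono S H) (y : Fin d → ℝ) :
    fitz S H y ≠ ⊥ := by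
  obtain ⟨z, hz⟩ := hH.nonempty
  intro h
  have h1 : ((Sb S z y - Sb S z z / 2 : ℝ) : EReal) ≤ fitz S H y :=
    le_iSup₂ (f := fun x (_ : x ∈ H) => ((Sb S x y - Sb S x x / 2 : ℝ) : EReal)) z hz
  rw [h, le_bot_iff] at h1
  exact EReal.coe_ne_bot _ h1

/-- `x` is a projection of `y` iff it attains the supremum defining the Fitzpatrick function. -/
lemma mem_SProj_iff (hS : S.IsHermitian) {G : Set (Fin d → ℝ)} {x y : Fin d → ℝ} :
    x ∈ SProj S G y ↔ x ∈ G ∧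
      ∀ z ∈ G, Sb S z y - Sb S z z / 2 ≤ Sb S x y - Sb S x x / 2 := by
  have key : ∀ z, Sb S (x - y) (x - y) ≤ Sb S (z - y) (z - y) ↔
      Sb S z y - Sb S z z / 2 ≤ Sb S x y - Sb S x x / 2 := fun z => by
    simp only [Sb_sub_left, Sb_sub_right, Sb_comm hS y]
    constructor <;> intro h <;> linarith
  simp only [SProj, Set.mem_ofPred_eq, key]

lemma fitz_eq_of_mem_SProj (hS : S.IsHermitian) {G : Set (Fin d → ℝ)} {x y : Fin d → ℝ}
    (h : x ∈ SProj S G y) : fitz S G y = ((Sb S x y - Sb S x x / 2 : ℝ) : EReal) := by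
  rw [mem_SProj_iff hS] at h
  refine le_antisymm (fitz_le_iff.2 h.2) ?_
  exact le_iSup₂ (f := fun x (_ : x ∈ G) => ((Sb S x y - Sb S x x / 2 : ℝ) : EReal)) x h.1

end Fitz

/-! ### Discrete plans -/

section Discrete
variable {d : ℕ} {S : Matrix (Fin d) (Fin d) ℝ} {ι : Type*} {s : Finset ι} {c : ι → ℝ}
  {X Y : ι → Fin d → ℝ}

/-- The discrete measure with mass `c i` at `(X i, Y i)` for `i ∈ s`. -/
abbrev discPlan (s : Finset ι) (c : ι → ℝ) (X Y : ι → Fin d → ℝ) :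
    Measure ((Fin d → ℝ) × (Fin d → ℝ)) :=
  ∑ i ∈ s, ENNReal.ofReal (c i) • Measure.dirac (X i, Y i)

lemma discPlan_map_snd : (discPlan s c X Y).map Prod.snd =
    ∑ i ∈ s, ENNReal.ofReal (c i) • Measure.dirac (Y i) := by
  rw [← Measure.mapₗ_apply_of_measurable measurable_snd, map_sum]
  refine Finset.sum_congr rfl fun i _ => ?_
  rw [map_smul, Measure.mapₗ_apply_of_measurable measurable_snd,
    Measure.map_dirac' measurable_snd]

lemma discPlan_apply (A : Set ((Fin d → ℝ) × (Fin d → ℝ))) :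
    discPlan s c X Y A = ∑ i ∈ s, ENNReal.ofReal (c i) * A.indicator 1 (X i, Y i) := by
  rw [Measure.finsetSum_apply]
  simp [Measure.dirac_apply]

lemma discPlan_integrable {E : Type*} [NormedAddCommGroup E]
    (h : (Fin d → ℝ) × (Fin d → ℝ) → E) : Integrable h (discPlan s c X Y) := by
  refine integrable_finsetSum_measure.2 fun i _ => ?_
  exact (integrable_dirac (by simp)).smul_measure ENNReal.ofReal_ne_top

lemma discPlan_integral {E : Type*} [NormedAddCommGroup E] [NormedSpace ℝ E] [CompleteSpace E]
    (hc : ∀ i ∈ s, 0 ≤ c i) (h : (Fin d → ℝ) × (Fin d → ℝ) → E) :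
    ∫ p, h p ∂(discPlan s c X Y) = ∑ i ∈ s, c i • h (X i, Y i) := by
  rw [integral_finsetSum_measure fun i _ =>
    (integrable_dirac (by simp)).smul_measure ENNReal.ofReal_ne_top]
  refine Finset.sum_congr rfl fun i hi => ?_
  rw [integral_smul_measure, integral_dirac, ENNReal.toReal_ofReal (hc i hi)]

lemma primalVal_discPlan (hc : ∀ i ∈ s, 0 ≤ c i) :
    primalVal S (discPlan s c X Y) = 1 / 2 * ∑ i ∈ s, c i * Sb S (X i) (Y i) := by
  rw [primalVal, discPlan_integral hc]
  rfl

lemma discPlan_isProb (hc : ∀ i ∈ s, 0 ≤ c i) (h1 : ∑ i ∈ s, c i = 1) :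
    IsProbabilityMeasure (discPlan s c X Y) := by
  constructor
  rw [discPlan_apply]
  simp [← ENNReal.ofReal_sum_of_nonneg hc, h1]

lemma discPlan_MGamma (hc : ∀ i ∈ s, 0 ≤ c i) (h1 : ∑ i ∈ s, c i = 1) (h : DMart s c X Y) :
    MGamma ((discPlan s c X Y).map Prod.snd) (discPlan s c X Y) := by
  have := discPlan_isProb (X := X) (Y := Y) hc h1
  refine ⟨inferInstance, rfl, discPlan_integrable _, ?_⟩
  refine (ae_eq_condExp_of_forall_setIntegral_eq measurable_fst.comap_le
    (discPlan_integrable _) (fun _ _ _ => (discPlan_integrable _).integrableOn) ?_ ?_).symm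
  · rintro _ ⟨A, hA, rfl⟩ -
    have hA' : MeasurableSet (Prod.fst ⁻¹' A : Set ((Fin d → ℝ) × (Fin d → ℝ))) :=
      measurable_fst hA
    rw [← integral_indicator hA', ← integral_indicator hA', discPlan_integral hc,
      discPlan_integral hc, ← sub_eq_zero, ← Finset.sum_sub_distrib, ← neg_eq_zero,
      ← Finset.sum_neg_distrib, ← h (A.indicator 1)]
    refine Finset.sum_congr rfl fun i _ => ?_
    by_cases hi : X i ∈ A <;> simp [hi, smul_sub]
  · exact (Measurable.stronglyMeasurable
      (comap_measurable Prod.fst)).aestronglyMeasurable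

lemma mem_msupp_discPlan {i : ι} (hi : i ∈ s) (hc : 0 < c i) :
    (X i, Y i) ∈ msupp (discPlan s c X Y) := by
  intro U hU h0
  rw [discPlan_apply, Finset.sum_eq_zero_iff] at h0
  have := h0 i hi
  rw [Set.indicator_of_mem (mem_of_mem_nhds hU)] at this
  simp at this
  linarith

lemma msupp_discPlan_finite : (msupp (discPlan s c X Y)).Finite := by
  classical
  set T : Set ((Fin d → ℝ) × (Fin d → ℝ)) := ↑(s.image fun i => (X i, Y i))
  have hT : T.Finite := Finset.finite_toSet _
  refine hT.subset fun p hp => ?_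
  by_contra hpT
  refine hp Tᶜ (hT.isClosed.isOpen_compl.mem_nhds hpT) ?_
  rw [discPlan_apply]
  refine Finset.sum_eq_zero fun i hi => ?_
  rw [Set.indicator_of_notMem, mul_zero]
  exact fun h => h (Finset.mem_coe.2 (Finset.mem_image_of_mem _ hi))

/-- A probability measure with finite support is a discrete measure with positive weights, and
its martingale property is the discrete one. -/
lemma exists_discPlan {γ : Measure ((Fin d → ℝ) × (Fin d → ℝ))} [IsProbabilityMeasure γ]
    (hfin : (msupp γ).Finite) (hmart : MartProp γ) :
    ∃ (T : Finset ((Fin d → ℝ) × (Fin d → ℝ))) (g : (Fin d → ℝ) × (Fin d → ℝ) → ℝ),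
      (∀ p, p ∈ msupp γ ↔ p ∈ T) ∧ (∀ p ∈ T, 0 < g p) ∧ ∑ p ∈ T, g p = 1 ∧
      γ = discPlan T g Prod.fst Prod.snd ∧ DMart T g Prod.fst Prod.snd := by
  classical
  set T := hfin.toFinset with hTdef
  have hT : ∀ p, p ∈ msupp γ ↔ p ∈ T := fun p => by simp [hTdef]
  have hsupp : msupp γ = γ.support := by
    ext p; simp [msupp, Measure.mem_support_iff_forall, pos_iff_ne_zero]
  have hnull : γ ((T : Set _)ᶜ) = 0 := by
    rw [hTdef, Set.Finite.coe_toFinset, hsupp]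
    exact Measure.measure_compl_support
  have hpos : ∀ p ∈ T, 0 < γ.real {p} := fun p hp => by
    refine ENNReal.toReal_pos (fun h0 => ?_) (measure_ne_top _ _)
    have hU : ((T.erase p : Finset _) : Set ((Fin d → ℝ) × (Fin d → ℝ)))ᶜ ∈ nhds p :=
      (Finset.finite_toSet _).isClosed.isOpen_compl.mem_nhds (by simp)
    refine (hT p).2 hp _ hU ?_
    refine measure_mono_null (t := {p} ∪ (T : Set _)ᶜ) (fun q hq => ?_)
      (measure_union_null h0 hnull)
    by_cases hqp : q = p
    · exact Or.inl hqp
    · exact Or.inr fun hqT => hq (by simpa [hqp] using hqT)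
  have hγ : γ = discPlan T (fun p => γ.real {p}) Prod.fst Prod.snd := by
    ext A hA
    rw [discPlan_apply, ← measure_inter_add_sdiff A T.measurableSet,
      measure_mono_null (s := A \ T) (fun q hq => hq.2) hnull, add_zero]
    have h1 : A ∩ (T : Set _) = ((T.filter (· ∈ A) : Finset _) : Set _) := by
      ext q; simp [and_comm]
    rw [h1, ← sum_measure_singleton, Finset.sum_filter]
    refine Finset.sum_congr rfl fun p _ => ?_
    by_cases hp : p ∈ A <;> simp [hp, ofReal_measureReal]
  refine ⟨T, fun p => γ.real {p}, hT, hpos, ?_, hγ, fun φ => ?_⟩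
  · have h1 : γ.real (T : Set _) = 1 := by
      rw [measureReal_def, (prob_compl_eq_zero_iff T.measurableSet).1 hnull, ENNReal.toReal_one]
    rw [← h1, sum_measureReal_singleton]
  · have hint : ∀ {E : Type} [NormedAddCommGroup E]
        (h : (Fin d → ℝ) × (Fin d → ℝ) → E), Integrable h γ := fun h => by
      rw [hγ]; exact discPlan_integrable h
    -- the martingale property on the fibre over `x`
    have hfib : ∀ x, ∑ p ∈ T with p.1 = x, γ.real {p} • (p.2 - p.1) = 0 := fun x => by
      have hA' : MeasurableSet (Prod.fst ⁻¹' {x} : Set ((Fin d → ℝ) × (Fin d → ℝ))) :=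
        measurable_fst (measurableSet_singleton x)
      have h1 := setIntegral_condExp (measurable_fst.comap_le) (hint fun p => p.2)
        (μ := γ) ⟨{x}, measurableSet_singleton x, rfl⟩
      rw [setIntegral_congr_ae hA' (hmart.mono fun p hp _ => hp), ← integral_indicator hA',
        ← integral_indicator hA', hγ, discPlan_integral fun p hp => (hpos p hp).le,
        discPlan_integral fun p hp => (hpos p hp).le, eq_comm, ← sub_eq_zero,
        ← Finset.sum_sub_distrib] at h1
      rw [Finset.sum_filter]
      refine (Finset.sum_congr rfl fun p _ => ?_).trans h1
      by_cases hp : p.1 = x <;> simp [hp, smul_sub]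
    rw [← Finset.sum_fiberwise_of_maps_to (t := T.image Prod.fst) (g := Prod.fst)
      fun p hp => Finset.mem_image_of_mem _ hp]
    refine Finset.sum_eq_zero fun x _ => ?_
    have h2 : ∀ p ∈ T.filter fun p => p.1 = x, (γ.real {p} * φ p.1) • (p.2 - p.1)
        = φ x • γ.real {p} • (p.2 - p.1) := fun p hp => by
      rw [(Finset.mem_filter.1 hp).2, smul_smul, mul_comm]
    rw [Finset.sum_congr rfl h2, ← Finset.smul_sum, hfib, smul_zero]

end Discrete

/-! ### Weak duality for general plans -/

section General
variable {d : ℕ} {S : Matrix (Fin d) (Fin d) ℝ}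

/-- Weak duality for arbitrary plans, against an integrable majorant `f` of the Fitzpatrick
function: conditioning on the first coordinate turns the affine minorants of `f(y)` into minorants
of its conditional expectation given `x`, and some `z` of `G` has `S(z - x, z - x) ≤ 0`. -/
lemma weak_duality_of_majorant {G : Set (Fin d → ℝ)} (hG : MaxSMono S G)
    {ν : Measure (Fin d → ℝ)} {γ : Measure ((Fin d → ℝ) × (Fin d → ℝ))} (hγ : MGamma ν γ)
    {f : (Fin d → ℝ) → ℝ} (hf : Integrable (fun p => f p.2) γ)
    (hle : ∀ᵐ p ∂γ, ∀ z ∈ G, Sb S z p.2 - Sb S z z / 2 ≤ f p.2) (hS : S.IsHermitian) :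
    primalVal S γ ≤ ∫ p, f p.2 ∂γ := by
  obtain ⟨hprob, -, hint, hmart⟩ := hγ
  set m : MeasurableSpace ((Fin d → ℝ) × (Fin d → ℝ)) :=
    MeasurableSpace.comap Prod.fst inferInstance with hm
  have hmle : m ≤ Prod.instMeasurableSpace := measurable_fst.comap_le
  -- integrability of the coordinates and of the form
  have hX2 : Integrable (fun p : (Fin d → ℝ) × (Fin d → ℝ) => ‖p.1‖ ^ 2) γ :=
    hint.mono' (by fun_prop) (.of_forall fun p => by
      rw [Real.norm_of_nonneg (by positivity)]; linarith [sq_nonneg ‖p.2‖])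
  have hYint : Integrable (fun p : (Fin d → ℝ) × (Fin d → ℝ) => p.2) γ :=
    (hint.add (integrable_const (1 : ℝ))).mono' (by fun_prop) (.of_forall fun p => by
      simp only [Pi.add_apply]
      nlinarith [sq_nonneg ‖p.1‖, sq_nonneg (‖p.2‖ - 1)])
  set B : (Fin d → ℝ) →L[ℝ] (Fin d → ℝ) →L[ℝ] ℝ := LinearMap.toContinuousBilinearMap
    (LinearMap.mk₂ ℝ (Sb S) Sb_add_left Sb_smul_left Sb_add_right Sb_smul_right) with hB
  have hBap : ∀ x y, B x y = Sb S x y := fun x y => rfl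
  have hBint : ∀ u v : (Fin d → ℝ) × (Fin d → ℝ) → (Fin d → ℝ), Continuous u → Continuous v →
      (∀ p, ‖u p‖ ≤ ‖p.1‖ ⊔ ‖p.2‖) → (∀ p, ‖v p‖ ≤ ‖p.1‖ ⊔ ‖p.2‖) →
      Integrable (fun p => B (u p) (v p)) γ := fun u v hu hv hu' hv' => by
    refine (hint.const_mul ‖B‖).mono' ?_ (.of_forall fun p => ?_)
    · exact (continuous_Sb hu hv).aestronglyMeasurable
    · refine (B.le_opNorm₂ _ _).trans ?_
      rw [mul_assoc]
      refine mul_le_mul_of_nonneg_left ?_ B.opNorm_nonneg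
      have h3 : (‖p.1‖ ⊔ ‖p.2‖) ^ 2 ≤ ‖p.1‖ ^ 2 + ‖p.2‖ ^ 2 := by
        rcases max_choice ‖p.1‖ ‖p.2‖ with h | h <;> rw [h] <;>
          nlinarith [sq_nonneg ‖p.1‖, sq_nonneg ‖p.2‖]
      refine le_trans ?_ h3
      rw [sq]
      exact mul_le_mul (hu' p) (hv' p) (norm_nonneg _) (le_max_of_le_left (norm_nonneg _))
  have hxy := hBint Prod.fst Prod.snd continuous_fst continuous_snd
    (fun p => le_max_left _ _) (fun p => le_max_right _ _)
  have hxx := hBint Prod.fst Prod.fst continuous_fst continuous_fst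
    (fun p => le_max_left _ _) (fun p => le_max_left _ _)
  -- the martingale property turns `S(x,y)` into `S(x,x)`
  have hpull : ∫ p, Sb S p.1 p.2 ∂γ = ∫ p, Sb S p.1 p.1 ∂γ := by
    have h1 := condExp_bilin_of_aestronglyMeasurable_left (m := m) (μ := γ) B (f := Prod.fst)
      (Measurable.stronglyMeasurable (comap_measurable Prod.fst)).aestronglyMeasurable hxy hYint
    calc ∫ p, Sb S p.1 p.2 ∂γ = ∫ p, (γ[fun p => B p.1 p.2 | m]) p ∂γ :=
          (integral_condExp hmle).symm
      _ = ∫ p, Sb S p.1 p.1 ∂γ := by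
        refine integral_congr_ae ?_
        filter_upwards [h1, hmart] with p hp hp2
        rw [hp, hp2, hBap]
  -- conditional expectation of the affine minorants
  have hz : ∀ z ∈ G, ∀ᵐ p ∂γ, Sb S z p.1 - Sb S z z / 2 ≤ (γ[fun p => f p.2 | m]) p := by
    intro z hzG
    have h1 := (B z).comp_condExp_add_const_comm hmle hYint (-(Sb S z z / 2))
    have h2 := condExp_mono (m := m) (μ := γ)
      (f := fun p : (Fin d → ℝ) × (Fin d → ℝ) => B z p.2 + -(Sb S z z / 2))
      (((B z).integrable_comp hYint).add (integrable_const _)) hf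
      (hle.mono fun p hp => by
        have := hp z hzG
        simp only [hBap]
        linarith)
    filter_upwards [h1, h2, hmart] with p hp1 hp2 hp3
    rw [← hp1, hp3, hBap] at hp2
    linarith
  -- all `z` in `G` at once, through a countable dense subset
  obtain ⟨D, hDG, hDc, hD⟩ :=
    (TopologicalSpace.IsSeparable.of_separableSpace G).exists_countable_dense_subset
  have hall : ∀ᵐ p ∂γ, ∀ z ∈ D, Sb S z p.1 - Sb S z z / 2 ≤ (γ[fun p => f p.2 | m]) p :=
    (ae_ball_iff hDc).2 fun z hzD => hz z (hDG hzD)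
  have hq : ∀ᵐ p ∂γ, 1 / 2 * Sb S p.1 p.1 ≤ (γ[fun p => f p.2 | m]) p := by
    filter_upwards [hall] with p hp
    obtain ⟨z, hzG, hz0, -⟩ := hG.exists_le p.1
    have hcl : IsClosed {z | Sb S z p.1 - Sb S z z / 2 ≤ (γ[fun p => f p.2 | m]) p} :=
      isClosed_le (((continuous_Sb continuous_id continuous_const).sub
        ((continuous_Sb continuous_id continuous_id).div_const 2))) continuous_const
    have h1 : Sb S z p.1 - Sb S z z / 2 ≤ (γ[fun p => f p.2 | m]) p :=
      closure_minimal (t := {z | Sb S z p.1 - Sb S z z / 2 ≤ (γ[fun p => f p.2 | m]) p})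
        hp hcl (hD hzG)
    simp only [Sb_sub_left, Sb_sub_right, Sb_comm hS p.1 z] at hz0
    linarith
  calc primalVal S γ = ∫ p, 1 / 2 * Sb S p.1 p.1 ∂γ := by
        rw [primalVal, hpull, integral_const_mul]
    _ ≤ ∫ p, (γ[fun p => f p.2 | m]) p ∂γ :=
        integral_mono_ae (hxx.const_mul _) integrable_condExp hq
    _ = ∫ p, f p.2 ∂γ := integral_condExp hmle

end General

/-! ### From the graph to optimal plans -/

section Forward
variable {d : ℕ} {S : Matrix (Fin d) (Fin d) ℝ} {ι : Type*} {s : Finset ι} {c : ι → ℝ}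
  {X Y : ι → Fin d → ℝ}

/-- If `Y i` projects to `X i` on `G` for all `i`, then `G` solves the dual problem. -/
lemma dualOpt_discPlan (hS : S.IsHermitian) {G : Set (Fin d → ℝ)} (hG : MaxSMono S G)
    (hc : ∀ i ∈ s, 0 < c i) (h : DMart s c X Y) (hY : ∀ i ∈ s, X i ∈ SProj S G (Y i)) :
    DualOpt S ((discPlan s c X Y).map Prod.snd) G := by
  rw [discPlan_map_snd]
  refine ⟨hG, fun H hH => ?_⟩
  by_cases htop : ∃ i ∈ s, fitz S H (Y i) = ⊤
  · obtain ⟨i, hi, hit⟩ := htop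
    rw [eInt_top hc (fitz_ne_bot hH) hi hit]
    exact le_top
  · push Not at htop
    have hF : ∀ i ∈ s, fitz S H (Y i) = ((fitz S H (Y i)).toReal : EReal) := fun i hi =>
      (EReal.coe_toReal (htop i hi) (fitz_ne_bot hH _)).symm
    rw [eInt_real hc hF, eInt_real hc fun i hi => fitz_eq_of_mem_SProj hS (hY i hi),
      EReal.coe_le_coe_iff]
    refine le_trans (le_of_eq ?_)
      (DMart.weak_duality hS hc h hH fun i hi => fitz_le_iff.1 (hF i hi).le).1
    have := h.sum_Sb (S := S) fun x => x
    simp only [Sb_sub_right, mul_sub, Finset.sum_sub_distrib] at this ⊢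
    have h2 : ∀ i, c i * (Sb S (X i) (X i) / 2) = 1 / 2 * (c i * Sb S (X i) (X i)) :=
      fun i => by ring
    simp only [h2, ← Finset.mul_sum]
    linarith

/-- If all `Y i` project to the single point `x` of `G`, the plan is primal optimal: the
Fitzpatrick function of `G` agrees at the points `Y i` with an affine function. -/
lemma primalOpt_discPlan_const (hS : S.IsHermitian) {G : Set (Fin d → ℝ)} (hG : MaxSMono S G)
    (hc : ∀ i ∈ s, 0 < c i) (h1 : ∑ i ∈ s, c i = 1) {x : Fin d → ℝ}
    (h : DMart s c (fun _ => x) Y) (hY : ∀ i ∈ s, x ∈ SProj S G (Y i)) :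
    PrimalOpt S ((discPlan s c (fun _ => x) Y).map Prod.snd) (discPlan s c (fun _ => x) Y) := by
  classical
  have hc' : ∀ i ∈ s, 0 ≤ c i := fun i hi => (hc i hi).le
  refine ⟨discPlan_MGamma hc' h1 h, fun γ' hγ' => ?_⟩
  have hfc : Continuous fun y => Sb S x y - Sb S x x / 2 :=
    (continuous_Sb continuous_const continuous_id).sub continuous_const
  have hmap := hγ'.2.1
  have hint : Integrable (fun p : (Fin d → ℝ) × (Fin d → ℝ) => Sb S x p.2 - Sb S x x / 2) γ' := by
    refine (integrable_map_measure (g := fun y => Sb S x y - Sb S x x / 2)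
      hfc.aestronglyMeasurable measurable_snd.aemeasurable).1 ?_
    rw [hmap]
    exact (integrable_map_measure hfc.aestronglyMeasurable measurable_snd.aemeasurable).2
      (discPlan_integrable _)
  have hae : ∀ᵐ y ∂(γ'.map Prod.snd), ∀ z ∈ G,
      Sb S z y - Sb S z z / 2 ≤ Sb S x y - Sb S x x / 2 := by
    have hnull : (γ'.map Prod.snd) ((s.image Y : Finset _) : Set (Fin d → ℝ))ᶜ = 0 := by
      rw [hmap, Measure.map_apply measurable_snd (Finset.measurableSet _).compl, discPlan_apply]
      refine Finset.sum_eq_zero fun i hi => ?_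
      rw [Set.indicator_of_notMem, mul_zero]
      exact fun h => h (Finset.mem_coe.2 (Finset.mem_image_of_mem _ hi))
    rw [ae_iff]
    refine measure_mono_null (t := ((s.image Y : Finset _) : Set (Fin d → ℝ))ᶜ)
      (fun y hy hyY => hy ?_) hnull
    obtain ⟨i, hi, rfl⟩ := Finset.mem_image.1 (Finset.mem_coe.1 hyY)
    exact ((mem_SProj_iff hS).1 (hY i hi)).2
  refine (weak_duality_of_majorant (f := fun y => Sb S x y - Sb S x x / 2) hG hγ' hint
    (ae_of_ae_map measurable_snd.aemeasurable hae) hS).trans (le_of_eq ?_)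
  calc ∫ p, (Sb S x p.2 - Sb S x x / 2) ∂γ'
      = ∫ y, (Sb S x y - Sb S x x / 2) ∂(γ'.map Prod.snd) :=
        (integral_map measurable_snd.aemeasurable hfc.aestronglyMeasurable).symm
    _ = ∑ i ∈ s, c i * (Sb S x (Y i) - Sb S x x / 2) := by
        rw [hmap, integral_map measurable_snd.aemeasurable hfc.aestronglyMeasurable,
          discPlan_integral hc']
        rfl
    _ = primalVal S (discPlan s c (fun _ => x) Y) := by
        rw [primalVal_discPlan hc']
        have h2 := h.sum_Sb (S := S) fun x => x
        simp only [Sb_sub_right, mul_sub, Finset.sum_sub_distrib, ← Finset.sum_mul, h1] at h2 ⊢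
        linarith

/-- The plan supported on `(x, y)` and `(x, x + ε (x - y))` is optimal when both second
coordinates project to `x`. -/
lemma exists_plan_of_mem_SProjInv (hS : S.IsHermitian) {G : Set (Fin d → ℝ)} (hG : MaxSMono S G)
    {x y : Fin d → ℝ} {ε : ℝ} (hε : 0 < ε) (hy : y ∈ SProjInv S G x)
    (hy' : x + ε • (x - y) ∈ SProjInv S G x) :
    ∃ γ : Measure ((Fin d → ℝ) × (Fin d → ℝ)), ((msupp γ).Finite ∧
      PrimalOpt S (γ.map Prod.snd) γ ∧ DualOpt S (γ.map Prod.snd) G) ∧ (x, y) ∈ msupp γ := by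
  -- the weights that make `x` the barycenter of `y` and its reflection
  set c : Bool → ℝ := fun b => cond b (ε / (1 + ε)) (1 / (1 + ε)) with hcdef
  set Y : Bool → Fin d → ℝ := fun b => cond b y (x + ε • (x - y)) with hYdef
  have hc : ∀ b ∈ Finset.univ, 0 < c b := by
    rintro (_ | _) - <;> simp only [hcdef, cond_true, cond_false] <;> positivity
  have h1 : ∑ b, c b = 1 := by
    simp only [Fintype.sum_bool, hcdef, cond_true, cond_false]
    field_simp
    ring
  have hm : DMart Finset.univ c (fun _ => x) Y := fun φ => by
    simp only [Fintype.sum_bool, hcdef, hYdef, cond_true, cond_false]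
    ext j
    simp only [Pi.add_apply, Pi.smul_apply, Pi.sub_apply, smul_eq_mul, Pi.zero_apply]
    ring
  have hY : ∀ b ∈ Finset.univ, x ∈ SProj S G (Y b) := by
    rintro (_ | _) -
    · exact hy'
    · exact hy
  refine ⟨discPlan Finset.univ c (fun _ => x) Y, ⟨msupp_discPlan_finite,
    primalOpt_discPlan_const hS hG hc h1 hm hY, dualOpt_discPlan hS hG hc hm hY⟩, ?_⟩
  exact mem_msupp_discPlan (X := fun _ => x) (Y := Y) (Finset.mem_univ true)
    (hc true (Finset.mem_univ _))

end Forward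

/-! ### From optimal plans to the graph -/

section Backward
variable {d : ℕ} {S : Matrix (Fin d) (Fin d) ℝ}

/-- Strong duality at a primal optimal discrete plan: some maximal monotone set has dual value
at most the primal value. -/
lemma exists_dual_le (hS : S.IsHermitian) {T : Finset ((Fin d → ℝ) × (Fin d → ℝ))}
    {g : (Fin d → ℝ) × (Fin d → ℝ) → ℝ} (hg : ∀ p ∈ T, 0 < g p) (hg1 : ∑ p ∈ T, g p = 1)
    (hopt : PrimalOpt S ((discPlan T g Prod.fst Prod.snd).map Prod.snd)
      (discPlan T g Prod.fst Prod.snd)) :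
    ∃ (H : Set (Fin d → ℝ)) (f : T → ℝ), MaxSMono S H ∧
      ∑ p : T, g p * f p = primalVal S (discPlan T g Prod.fst Prod.snd) ∧
      ∀ p : T, fitz S H p.1.2 ≤ (f p : EReal) := by
  classical
  have hg1' : ∑ p : T, g p = 1 := by rw [Finset.sum_coe_sort T g, hg1]
  -- a splitting of the weights yields a competitor in the primal problem: each piece is collapsed
  -- to its barycenter
  have hcomp : ∀ (s : Finset (stdSimplex ℝ T)) (c : stdSimplex ℝ T → ℝ), (∀ w, 0 ≤ c w) →
      ∑ w ∈ s, c w • (w : T → ℝ) = (fun p : T => g p) →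
      ∑ w ∈ s, c w * (Sb S (∑ p, w.1 p • p.1.2) (∑ p, w.1 p • p.1.2) / 2) ≤
        primalVal S (discPlan T g Prod.fst Prod.snd) := by
    intro s c hc hsum
    set X : stdSimplex ℝ T × T → Fin d → ℝ := fun q => ∑ p, q.1.1 p • p.1.2 with hX
    set Y : stdSimplex ℝ T × T → Fin d → ℝ := fun q => q.2.1.2 with hY
    set C : stdSimplex ℝ T × T → ℝ := fun q => c q.1 * q.1.1 q.2 with hC
    have hC0 : ∀ q ∈ s ×ˢ Finset.univ, 0 ≤ C q := fun q _ => mul_nonneg (hc _) (q.1.2.1 _)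
    have hmarg : ∀ p : T, ∑ w ∈ s, c w * w.1 p = g p := fun p => by
      rw [← congrFun hsum p, Finset.sum_apply]
      rfl
    have hC1 : ∑ q ∈ s ×ˢ Finset.univ, C q = 1 := by
      rw [Finset.sum_product_right]
      simp only [hC, hmarg, hg1']
    have hM : DMart (s ×ˢ Finset.univ) C X Y := fun φ => by
      rw [Finset.sum_product]
      refine Finset.sum_eq_zero fun w _ => ?_
      have h2 : ∀ p : T, (C (w, p) * φ (X (w, p))) • (Y (w, p) - X (w, p)) =
          (c w * φ (∑ p, w.1 p • p.1.2)) • (w.1 p • p.1.2 - w.1 p • ∑ p, w.1 p • p.1.2) :=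
        fun p => by
          simp only [hC, hX, hY, ← smul_sub, smul_smul]
          congr 1; ring
      simp only [h2]
      rw [← Finset.smul_sum, Finset.sum_sub_distrib, ← Finset.sum_smul, w.2.2, one_smul, sub_self,
        smul_zero]
    have hν : (discPlan T g Prod.fst Prod.snd).map Prod.snd =
        (discPlan (s ×ˢ Finset.univ) C X Y).map Prod.snd := by
      rw [discPlan_map_snd, discPlan_map_snd, Finset.sum_product_right,
        ← Finset.sum_coe_sort T fun p => ENNReal.ofReal (g p) • Measure.dirac p.2]
      refine Finset.sum_congr rfl fun p _ => ?_
      rw [← hmarg p, ENNReal.ofReal_sum_of_nonneg fun w _ => mul_nonneg (hc w) (w.2.1 p),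
        Finset.sum_smul]
    have h3 := hopt.2 (discPlan (s ×ˢ Finset.univ) C X Y)
      (hν ▸ discPlan_MGamma hC0 hC1 hM)
    refine le_trans (le_of_eq ?_) h3
    rw [primalVal_discPlan hC0, Finset.sum_product, Finset.mul_sum]
    refine Finset.sum_congr rfl fun w _ => ?_
    have h4 : ∀ p : T, C (w, p) * Sb S (X (w, p)) (Y (w, p)) =
        c w * Sb S (∑ p, w.1 p • p.1.2) (w.1 p • p.1.2) := fun p => by
      rw [Sb_smul_right]; simp only [hC, hX, hY]; ring
    simp only [h4]
    rw [← Finset.mul_sum, ← Sb_sum_right]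
    ring
  obtain ⟨f, hf, hfle⟩ := exists_prices (S := S) (fun p : T => p.1.2) (fun p : T => g p)
    (fun p => hg p p.2) hg1' _ hcomp
  -- the convex set spanned by the points `p.2` at the heights `f p` lies above the form
  set Λ : (T → ℝ) →ₗ[ℝ] (Fin d → ℝ) × ℝ :=
    (Fintype.linearCombination ℝ fun p : T => p.1.2).prod (Fintype.linearCombination ℝ f) with hΛ
  have hΛ1 : ∀ w, (Λ w).1 = ∑ p, w p • p.1.2 := fun w => rfl
  have hΛ2 : ∀ w, (Λ w).2 = ∑ p, w p * f p := fun w => rfl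
  have hne : T.Nonempty := Finset.nonempty_of_sum_ne_zero (hg1.symm ▸ one_ne_zero)
  obtain ⟨p₀, hp₀⟩ := hne
  obtain ⟨H, hH, hHle⟩ := exists_maxSMono hS (E₀ := Λ '' stdSimplex ℝ T)
    ((convex_stdSimplex ℝ T).linear_image Λ)
    ⟨_, Set.mem_image_of_mem Λ (single_mem_stdSimplex ℝ ⟨p₀, hp₀⟩)⟩
    (by
      rintro _ ⟨w, hw, rfl⟩
      have := hfle w hw
      rw [hΛ1, hΛ2]
      exact this)
  refine ⟨H, f, hH, hf, fun p => fitz_le_iff.2 fun z hz => ?_⟩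
  have := hHle z hz _ (Set.mem_image_of_mem Λ (single_mem_stdSimplex ℝ p))
  simpa [hΛ, Fintype.linearCombination_apply_single] using this

/-- If `G` is dual optimal for an optimal discrete plan, every support point `p` of the plan has
`p.1` among the projections of `p.2`: there is no duality gap, so weak duality holds with
equality. -/
lemma mem_SProjInv_of_opt (hS : S.IsHermitian) {T : Finset ((Fin d → ℝ) × (Fin d → ℝ))}
    {g : (Fin d → ℝ) × (Fin d → ℝ) → ℝ} (hg : ∀ p ∈ T, 0 < g p) (hg1 : ∑ p ∈ T, g p = 1)
    (hM : DMart T g Prod.fst Prod.snd) {G : Set (Fin d → ℝ)}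
    (hopt : PrimalOpt S ((discPlan T g Prod.fst Prod.snd).map Prod.snd)
      (discPlan T g Prod.fst Prod.snd))
    (hdual : DualOpt S ((discPlan T g Prod.fst Prod.snd).map Prod.snd) G) :
    ∀ p ∈ T, p.1 ∈ G ∧ p.2 ∈ SProjInv S G p.1 := by
  obtain ⟨H, f, hH, hf, hfle⟩ := exists_dual_le hS hg hg1 hopt
  obtain ⟨hG, hdual⟩ := hdual
  have hd := hdual H hH
  rw [discPlan_map_snd] at hd
  -- the value of `H`
  have hHtop : ∀ p ∈ T, fitz S H p.2 = ((fitz S H p.2).toReal : EReal) := fun p hp =>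
    (EReal.coe_toReal (ne_top_of_le_ne_top (EReal.coe_ne_top _) (hfle ⟨p, hp⟩))
      (fitz_ne_bot hH _)).symm
  rw [eInt_real hg hHtop] at hd
  -- the Fitzpatrick function of `G` is finite at the points of `T`
  have hGtop : ∀ p ∈ T, fitz S G p.2 = ((fitz S G p.2).toReal : EReal) := fun p hp => by
    refine (EReal.coe_toReal (fun htop => ?_) (fitz_ne_bot hG _)).symm
    rw [eInt_top hg (fitz_ne_bot hG) hp htop, top_le_iff] at hd
    exact EReal.coe_ne_top _ hd
  rw [eInt_real hg hGtop, EReal.coe_le_coe_iff] at hd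
  have hHv : ∑ p ∈ T, g p * (fitz S H p.2).toReal ≤
      1 / 2 * ∑ p ∈ T, g p * Sb S p.1 p.2 := by
    rw [← primalVal_discPlan fun p hp => (hg p hp).le, ← hf,
      ← Finset.sum_coe_sort T fun p => g p * (fitz S H p.2).toReal]
    refine Finset.sum_le_sum fun p _ => mul_le_mul_of_nonneg_left ?_ (hg p p.2).le
    have := hfle p
    rwa [hHtop p p.2, EReal.coe_le_coe_iff] at this
  have hFG : ∀ p ∈ T, ∀ z ∈ G, Sb S z p.2 - Sb S z z / 2 ≤ (fitz S G p.2).toReal :=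
    fun p hp => fitz_le_iff.1 (hGtop p hp).le
  have heq := (DMart.weak_duality hS hg hM hG hFG).2 (hd.trans hHv)
  intro p hp
  refine ⟨(heq p hp).1, (mem_SProj_iff hS).2 ⟨(heq p hp).1, fun z hz => ?_⟩⟩
  rw [← (heq p hp).2]
  exact hFG p hp z hz

/-- A point `p.2` of the fibre over `p.1` can be reflected slightly through the barycenter `p.1`
without leaving the convex set of points projecting to `p.1`. -/
lemma mem_QG_of_mem_SProjInv (hS : S.IsHermitian) {T : Finset ((Fin d → ℝ) × (Fin d → ℝ))}
    {g : (Fin d → ℝ) × (Fin d → ℝ) → ℝ} (hg : ∀ p ∈ T, 0 < g p) (hg1 : ∑ p ∈ T, g p = 1)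
    (hM : DMart T g Prod.fst Prod.snd) {G : Set (Fin d → ℝ)}
    (h : ∀ p ∈ T, p.1 ∈ G ∧ p.2 ∈ SProjInv S G p.1) {p : (Fin d → ℝ) × (Fin d → ℝ)}
    (hp : p ∈ T) : p.2 ∈ QG S G p.1 := by
  classical
  -- any `ε ≤ g p` works, as the fibre over `p.1` has mass at most one
  obtain ⟨n, hn⟩ := exists_nat_one_div_lt (hg p hp)
  refine Set.mem_iUnion.2 ⟨n, (h p hp).2, (mem_SProj_iff hS).2 ⟨(h p hp).1, fun z hz => ?_⟩⟩
  set ε : ℝ := 1 / ((n : ℝ) + 1) with hεdef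
  have hε : 0 < ε := by positivity
  -- the affine function of `y` whose sign expresses that `p.1` beats `z`
  set a : (Fin d → ℝ) → ℝ := fun y =>
    (Sb S p.1 y - Sb S p.1 p.1 / 2) - (Sb S z y - Sb S z z / 2) with ha
  set φ : (Fin d → ℝ) → ℝ := fun x => if x = p.1 then 1 else 0 with hφ
  have hfib : ∀ q ∈ T, 0 ≤ g q * φ q.1 * a q.2 := fun q hq => by
    by_cases hqp : q.1 = p.1
    · have := ((mem_SProj_iff hS).1 (h q hq).2).2 z hz
      rw [hqp] at this
      simp only [hφ, hqp, if_true, mul_one]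
      exact mul_nonneg (hg q hq).le (sub_nonneg.2 this)
    · simp [hφ, hqp]
  have h1 : g p * a p.2 ≤ ∑ q ∈ T, g q * φ q.1 * a q.2 := by
    have := Finset.single_le_sum hfib hp
    simpa [hφ] using this
  have h2 : ∑ q ∈ T, g q * φ q.1 * a q.2 = (∑ q ∈ T, g q * φ q.1) * a p.1 := by
    have h3 := congrArg (fun v => Sb S p.1 v - Sb S z v) (hM φ)
    simp only [Sb_sum_right, Sb_zero_right, sub_self, ← Finset.sum_sub_distrib] at h3
    rw [Finset.sum_mul, ← sub_eq_zero, ← Finset.sum_sub_distrib, ← h3]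
    refine Finset.sum_congr rfl fun q _ => ?_
    by_cases hqp : q.1 = p.1
    · simp only [ha, hqp, Sb_smul_right, Sb_sub_right]; ring
    · simp [hφ, hqp, Sb_zero_right]
  have h3 : 0 ≤ ∑ q ∈ T, g q * φ q.1 := Finset.sum_nonneg fun q hq => by
    simp only [hφ]; split_ifs <;> simp [(hg q hq).le]
  have h4 : ∑ q ∈ T, g q * φ q.1 ≤ 1 := by
    rw [← hg1]
    refine Finset.sum_le_sum fun q hq => ?_
    simp only [hφ]; split_ifs <;> simp [(hg q hq).le]
  have h5 : 0 ≤ a p.2 := by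
    have := ((mem_SProj_iff hS).1 (h p hp).2).2 z hz
    exact sub_nonneg.2 this
  have h6 : 0 ≤ a p.1 := by
    by_contra! hneg
    have : 0 < ∑ q ∈ T, g q * φ q.1 := by
      refine lt_of_lt_of_le (hg p hp) ?_
      have := Finset.single_le_sum (f := fun q => g q * φ q.1) (fun q hq => by
        simp only [hφ]; split_ifs <;> simp [(hg q hq).le]) hp
      simpa [hφ] using this
    nlinarith [mul_nonneg (hg p hp).le h5]
  have h7 : ε * a p.2 ≤ (1 + ε) * a p.1 := by nlinarith [mul_nonneg (sub_nonneg.2 hn.le) h5]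
  have h8 : a (p.1 + ε • (p.1 - p.2)) = (1 + ε) * a p.1 - ε * a p.2 := by
    simp only [ha, Sb_add_right, Sb_sub_right, Sb_smul_right]; ring
  have h9 : 0 ≤ a (p.1 + ε • (p.1 - p.2)) := by linarith
  exact sub_nonneg.1 h9

end Backward

/-- Theorem 2: for a maximal `S`-monotone set `G`, the graph of `Q_G`
is the union of the supports of the finitely supported probability measures `γ` on
`ℝ^{2d}` such that `γ` and `G` solve the primal and dual problems for the terminal law
`ν(dy) = γ(ℝ^d, dy)`. -/
theorem graph_QG_eq_union_of_supports
    (d m : ℕ) (S : Matrix (Fin d) (Fin d) ℝ) (hS : S.IsHermitian)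
    (hrank : IsUnit S.det)
    (hm : Nat.card {i : Fin d // 0 < hS.eigenvalues i} = m)
    (G : Set (Fin d → ℝ)) (hG : MaxSMono S G) :
    {p : (Fin d → ℝ) × (Fin d → ℝ) | p.1 ∈ G ∧ p.2 ∈ QG S G p.1} =
      ⋃ γ ∈ {γ : Measure ((Fin d → ℝ) × (Fin d → ℝ)) |
        (msupp γ).Finite ∧ PrimalOpt S (γ.map Prod.snd) γ ∧
          DualOpt S (γ.map Prod.snd) G}, msupp γ := by
  ext p
  simp only [Set.mem_iUnion, exists_prop]
  constructor
  · rintro ⟨-, hQ⟩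
    obtain ⟨n, hy, hy'⟩ := Set.mem_iUnion.1 hQ
    exact exists_plan_of_mem_SProjInv hS hG (by positivity) hy hy'
  · rintro ⟨γ, ⟨hfin, hprim, hdual⟩, hp⟩
    have := hprim.1.1
    obtain ⟨T, g, hT, hg, hg1, hγ, hM⟩ := exists_discPlan hfin hprim.1.2.2.2
    rw [hγ] at hprim hdual
    have h := mem_SProjInv_of_opt hS hg hg1 hM hprim hdual
    exact ⟨(h p ((hT p).1 hp)).1, mem_QG_of_mem_SProjInv hS hg hg1 hM h ((hT p).1 hp)⟩

end
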